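/- arXiv:1503.08320 — 2 statements merged into one kernel-verified Lean document; each statement's English description precedes it below -/
import Mathlib

section
/- Let T be a finite simplicial complex with a simplicial action of a finite group G. If the fundamental group of the topological realization |T| is finite, then the fundamental group of the quotient |T|/G is also finite. -/
/-!
Write `X = |T|` and let `q : X → X/G` be the quotient map. The homotopy classes of paths in `X` from
a point `x` to points of its (finite) orbit form a finite set, since each set of classes of paths
with fixed endpoints is either empty or in bijection with `π₁(X, x)`. Projecting such a path to
`X/G` gives a loop at `q x`, so it is enough that every loop at `q x` is, up to homotopy, the
projection of a path starting at `x` (`finite_pi1_of_pathLifts`). No lifting of homotopies is needed.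

Lifting of paths up to homotopy is a local matter (`pathLifts_of_local`). Around a point `x`, the
complex `X` is star-shaped with centre `x`, and in a small enough ball only elements of the
stabilizer of `x` identify points. As the action is affine, the straight-line contraction of the
ball to `x` descends to its image `V` in `X/G`, so `V` is simply connected
(`exists_good_nhd`). Any two points of `V` are joined by the projection of a path through a translate
of `x`, starting at any prescribed lift of the first point, and by simple connectedness this
projection is homotopic to any given path in `V` with the same endpoints.
-/

open Topology unitInterval

/-! ### Lifting paths up to homotopy -/

/-- The path `p` in `Y` lifts along `q : X → Y` up to homotopy, from any starting point: for each `a`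
over its source there is a path in `X` starting at `a` whose projection is homotopic, relative to
the endpoints, to `p`. The end of the lift may be any point over the target of `p`. -/
def PathLifts {X Y : Type*} [TopologicalSpace X] [TopologicalSpace Y] (q : C(X, Y)) {y z : Y}
    (p : Path y z) : Prop :=
  ∀ (a : X) (ha : q a = y), ∃ (b : X) (hb : q b = z) (γ : Path a b),
    p.Homotopic ((γ.map q.continuous).cast ha.symm hb.symm)

section Lifting

variable {X Y : Type*} [TopologicalSpace X] [TopologicalSpace Y] {q : C(X, Y)}

theorem PathLifts.congr {y z : Y} {p p' : Path y z} (h : PathLifts q p) (hp : p'.Homotopic p) :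
    PathLifts q p' := by
  intro a ha
  obtain ⟨b, hb, γ, hγ⟩ := h a ha
  exact ⟨b, hb, γ, hp.trans hγ⟩

theorem PathLifts.trans {y z w : Y} {p : Path y z} {p' : Path z w} (h : PathLifts q p)
    (h' : PathLifts q p') : PathLifts q (p.trans p') := by
  intro a ha
  obtain ⟨b, rfl, γ, hγ⟩ := h a ha
  obtain ⟨c, rfl, γ', hγ'⟩ := h' b rfl
  subst ha
  refine ⟨c, rfl, γ.trans γ', ?_⟩
  have := hγ.hcomp hγ'
  simpa [Path.map_trans] using this

theorem PathLifts.refl (y : Y) : PathLifts q (Path.refl y) := by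
  rintro a rfl
  exact ⟨a, rfl, Path.refl a, Path.Homotopic.refl _⟩

theorem PathLifts.of_cast {y z y' z' : Y} {p : Path y z} {hy : y' = y} {hz : z' = z}
    (h : PathLifts q (p.cast hy hz)) : PathLifts q p := by
  subst hy hz
  exact h

/-- Lifting up to homotopy is a local property on the base, by subdivision of the path. -/
theorem pathLifts_of_local
    (H : ∀ y : Y, ∃ V : Set Y, IsOpen V ∧ y ∈ V ∧
      ∀ (z w : Y) (p : Path z w), Set.range p ⊆ V → PathLifts q p)
    {y z : Y} (p : Path y z) : PathLifts q p := by
  choose V hVo hV hVp using H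
  obtain ⟨t, ht0, htm, ⟨n, hn⟩, ht⟩ := exists_monotone_Icc_subset_open_cover_unitInterval
    (c := fun y => p ⁻¹' V y) (fun y => (hVo y).preimage p.continuous)
    (fun s _ => Set.mem_iUnion.2 ⟨p s, hV _⟩)
  have key : ∀ m, PathLifts q (p.subpath 0 (t m)) := by
    intro m
    induction m with
    | zero =>
      rw [ht0, Path.subpath_self]
      exact PathLifts.refl _
    | succ m ih =>
      obtain ⟨v, hv⟩ := ht m
      have h2 : PathLifts q (p.subpath (t m) (t (m + 1))) := by
        apply hVp v
        rw [Path.range_subpath_of_le _ _ _ (htm m.le_succ)]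
        exact Set.image_subset_iff.2 hv
      exact (ih.trans h2).congr ⟨(Path.Homotopy.subpathTransSubpath p 0 (t m) (t (m + 1))).symm⟩
  have h1 := key n
  rw [hn n le_rfl, Path.subpath_zero_one] at h1
  exact h1.of_cast

/-- A path inside a simply connected `V` is determined up to homotopy by its endpoints, so it lifts
as soon as its endpoints can be connected upstairs, inside the preimage of `V`. -/
theorem pathLifts_of_isSimplyConnected {V : Set Y} (hV : IsSimplyConnected V)
    (hJ : ∀ a c : X, q a ∈ V → q c ∈ V → ∃ b, q b = q c ∧ JoinedIn (q ⁻¹' V) a b)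
    (hq : Function.Surjective q) {y z : Y} (p : Path y z) (hp : Set.range p ⊆ V) :
    PathLifts q p := by
  rintro a rfl
  obtain ⟨c, rfl⟩ := hq z
  have haV : q a ∈ V := hp ⟨0, p.source⟩
  have hcV : q c ∈ V := hp ⟨1, p.target⟩
  obtain ⟨b, hb, γ, hγ⟩ := hJ a c haV hcV
  refine ⟨b, hb, γ, ?_⟩
  have := hV.simplyConnectedSpace
  let p₁ : Path (⟨q a, haV⟩ : V) ⟨q c, hcV⟩ :=
    { toFun := fun t => ⟨p t, hp ⟨t, rfl⟩⟩
      continuous_toFun := by fun_prop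
      source' := by simp
      target' := by simp }
  let p₂ : Path (⟨q a, haV⟩ : V) ⟨q c, hcV⟩ :=
    { toFun := fun t => ⟨q (γ t), hγ t⟩
      continuous_toFun := by fun_prop
      source' := by simp
      target' := by simp [hb] }
  exact (SimplyConnectedSpace.paths_homotopic p₁ p₂).map ⟨Subtype.val, continuous_subtype_val⟩

/-- The classes of paths from `x` to the points of its fibre form a finite set, and they project
onto the fundamental group of the base. -/
theorem finite_pi1_of_pathLifts (hp : ∀ {y z : Y} (p : Path y z), PathLifts q p)
    (hfib : ∀ y, (q ⁻¹' {y}).Finite) (hπ : ∀ x, Finite (FundamentalGroup X x)) (x : X) :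
    Finite (FundamentalGroup Y (q x)) := by
  have hfin : ∀ z : X, Finite (Path.Homotopic.Quotient x z) := by
    intro z
    rcases isEmpty_or_nonempty (Path.Homotopic.Quotient x z) with h | ⟨⟨e⟩⟩
    · infer_instance
    · -- composition with the inverse of a fixed class `e` embeds the classes into `π₁(X, x)`
      have := hπ x
      let e' : FundamentalGroupoid.mk x ⟶ FundamentalGroupoid.mk z := e
      refine Finite.of_injective (β := FundamentalGroup X x)
        (fun f => CategoryTheory.CategoryStruct.comp
          (show FundamentalGroupoid.mk x ⟶ FundamentalGroupoid.mk z from f)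
          (CategoryTheory.inv e')) ?_
      intro f g h
      exact (CategoryTheory.cancel_mono (CategoryTheory.inv e')).1 h
  have := (hfib (q x)).to_subtype
  refine Finite.of_surjective (α := Σ z : q ⁻¹' {q x}, Path.Homotopic.Quotient x (z : X))
    (β := FundamentalGroup Y (q x))
    (fun s => (Path.Homotopic.Quotient.map s.2 q).cast rfl s.1.2.symm) ?_
  intro f
  obtain ⟨p, rfl⟩ := Path.Homotopic.Quotient.mk_surjective f
  obtain ⟨b, hb, γ, hγ⟩ := hp p x rfl
  refine ⟨⟨⟨b, hb⟩, Path.Homotopic.Quotient.mk γ⟩, ?_⟩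
  exact (Path.Homotopic.Quotient.eq.2 hγ).symm

/-- A contraction `H` of `S` to a point `x` that respects the fibres of an open quotient map `f`
descends to a contraction of the quotient. -/
theorem contractibleSpace_of_isOpenQuotientMap {S W : Type*} [TopologicalSpace S]
    [TopologicalSpace W] {f : S → W} (hf : IsOpenQuotientMap f) (H : S × I → S)
    (hH : Continuous H) (x : S) (h0 : ∀ s, H (s, 0) = s) (h1 : ∀ s, H (s, 1) = x)
    (hcompat : ∀ s s' t, f s = f s' → f (H (s, t)) = f (H (s', t))) : ContractibleSpace W := by
  rw [contractible_iff_id_nullhomotopic]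
  have hs := Function.surjInv_eq hf.surjective
  have hprod : IsOpenQuotientMap (Prod.map f (id : I → I)) := hf.prodMap .id
  refine ⟨f x, ⟨
    { toFun := fun w => f (H (Function.surjInv hf.surjective w.2, w.1))
      continuous_toFun := ?_
      map_zero_left := fun w => ?_
      map_one_left := fun w => ?_ }⟩⟩
  · -- `f × id` is again an open quotient map, so continuity may be checked on `S × I`
    have : Continuous (fun w : W × I => f (H (Function.surjInv hf.surjective w.1, w.2))) := by
      rw [← hprod.continuous_comp_iff]
      refine (hf.continuous.comp hH).congr fun s => ?_
      exact hcompat _ _ _ (hs _).symm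
    exact this.comp continuous_swap
  · simp [h0, hs]
  · simp [h1]

end Lifting

/-! ### Quotients of locally conical sets by affine actions -/

section Action

variable {E : Type*} [NormedAddCommGroup E] [NormedSpace ℝ E] {X : Set E}
  {G : Type*} [Group G] [Finite G] (ρ : G →* (E ≃ᵃ[ℝ] E))
  {Y : Type*} [TopologicalSpace Y] {q : C(X, Y)}

/-- A small ball around `x` is star-shaped with centre `x`, and only elements of the stabilizer of
`x` carry one of its points to another. -/
theorem exists_good_ball (hρ : ∀ g, Continuous (ρ g))
    (hX : ∀ x ∈ X, ∀ᶠ z in 𝓝[X] x, segment ℝ x z ⊆ X) (x : X) :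
    ∃ r > 0, (∀ z ∈ Metric.ball x r, segment ℝ (x : E) z ⊆ X) ∧
      ∀ z ∈ Metric.ball x r, ∀ z' ∈ Metric.ball x r, ∀ g : G,
        ρ g (z : E) = z' → ρ g (x : E) = x := by
  have h1 : ∀ᶠ z : X in 𝓝 x, segment ℝ (x : E) z ⊆ X := by
    have := hX x x.2
    rw [nhdsWithin_eq_map_subtype_coe x.2] at this
    exact this
  have h2 : ∀ᶠ w : X × X in 𝓝 x ×ˢ 𝓝 x, ∀ g : G, ρ g (w.1 : E) = w.2 → ρ g (x : E) = x := by
    rw [Filter.eventually_all, ← nhds_prod_eq]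
    intro g
    by_cases hg : ρ g (x : E) = x
    · exact Filter.Eventually.of_forall fun _ _ => hg
    · have hc : ContinuousAt (fun w : X × X => ρ g (w.1 : E)) (x, x) :=
        ((hρ g).comp (continuous_subtype_val.comp continuous_fst)).continuousAt
      have hc' : ContinuousAt (fun w : X × X => (w.2 : E)) (x, x) :=
        (continuous_subtype_val.comp continuous_snd).continuousAt
      filter_upwards [hc.ne_iff_eventually_ne hc' |>.1 hg] with w hw h using absurd h hw
  obtain ⟨r₁, hr₁, H₁⟩ := Metric.eventually_nhds_iff_ball.1 h1
  obtain ⟨r₂, hr₂, H₂⟩ := (Metric.nhds_basis_ball.prod_self).eventually_iff.1 h2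
  refine ⟨min r₁ r₂, lt_min hr₁ hr₂, fun z hz => H₁ z ?_, fun z hz z' hz' g => ?_⟩
  · exact Metric.ball_subset_ball (min_le_left _ _) hz
  · exact H₂ (x := (z, z')) ⟨Metric.ball_subset_ball (min_le_right _ _) hz,
      Metric.ball_subset_ball (min_le_right _ _) hz'⟩ g

/-- If `X` is locally conical, each point of the quotient has a simply connected open neighbourhood
`V` such that paths in the preimage of `V` connect any point to the orbit of any other. -/
theorem exists_good_nhd (hρ : ∀ g, Continuous (ρ g))
    (hmaps : ∀ g, Set.MapsTo (ρ g) X X)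
    (hX : ∀ x ∈ X, ∀ᶠ z in 𝓝[X] x, segment ℝ x z ⊆ X)
    (hq : IsOpenQuotientMap q) (hqr : ∀ a b : X, q a = q b ↔ ∃ g : G, ρ g (a : E) = b) (x : X) :
    ∃ V : Set Y, IsOpen V ∧ q x ∈ V ∧ IsSimplyConnected V ∧
      ∀ a c : X, q a ∈ V → q c ∈ V → ∃ b, q b = q c ∧ JoinedIn (q ⁻¹' V) a b := by
  obtain ⟨r, hr, hseg, hfix⟩ := exists_good_ball ρ hρ hX x
  set B : Set X := Metric.ball x r with hB
  have hxB : x ∈ B := Metric.mem_ball_self hr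
  -- the straight-line contraction of `B` onto its centre
  have hmemX : ∀ (z : B) (t : I), AffineMap.lineMap ((z : X) : E) (x : E) (t : ℝ) ∈ X := by
    intro z t
    apply hseg z z.2
    rw [segment_symm, segment_eq_image_lineMap]
    exact ⟨t, t.2, rfl⟩
  have hmemB : ∀ (z : B) (t : I), (⟨_, hmemX z t⟩ : X) ∈ B := by
    intro z t
    have h1 : dist ((z : X) : E) (x : E) < r := z.2
    change dist (AffineMap.lineMap ((z : X) : E) (x : E) (t : ℝ)) (x : E) < r
    rw [dist_lineMap_right, Real.norm_of_nonneg (by linarith [t.2.2])]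
    have := t.2.1
    nlinarith [dist_nonneg (x := ((z : X) : E)) (y := (x : E))]
  let H : B × I → B := fun s => ⟨⟨_, hmemX s.1 s.2⟩, hmemB s.1 s.2⟩
  have hH : Continuous H := by
    refine Continuous.subtype_mk (Continuous.subtype_mk ?_ _) _
    simp only [AffineMap.lineMap_apply_module]
    fun_prop
  have hH0 : ∀ s, H (s, 0) = s := fun s => by ext; simp [H]
  have hH1 : ∀ s, H (s, 1) = ⟨x, hxB⟩ := fun s => by ext; simp [H]
  let f : B → q '' B := fun z => ⟨q z, z, z.2, rfl⟩
  have hf : IsOpenQuotientMap f := by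
    refine ⟨?_, ?_, ?_⟩
    · rintro ⟨_, z, hz, rfl⟩
      exact ⟨⟨z, hz⟩, rfl⟩
    · fun_prop
    · have ho : IsOpenMap (fun z : B => q z) :=
        hq.isOpenMap.comp Metric.isOpen_ball.isOpenMap_subtype_val
      intro U hU
      refine ⟨_, ho U hU, ?_⟩
      ext ⟨w, hw⟩
      simp only [Set.mem_preimage, Set.mem_image, f, Subtype.ext_iff]
  have hcon : ContractibleSpace (q '' B) := by
    refine contractibleSpace_of_isOpenQuotientMap hf H hH ⟨x, hxB⟩ hH0 hH1 ?_
    intro s s' t h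
    obtain ⟨g, hg⟩ := (hqr s s').1 (congrArg Subtype.val h)
    have hgx := hfix s s.2 s' s'.2 g hg
    refine Subtype.ext ((hqr _ _).2 ⟨g, ?_⟩)
    change ρ g (AffineMap.lineMap _ _ _) = AffineMap.lineMap _ _ _
    -- `g` fixes the centre `x`, and affine maps commute with `lineMap`
    rw [← hg]
    conv_rhs => rw [← hgx]
    exact AffineMap.apply_lineMap (ρ g).toAffineMap _ _ _
  refine ⟨q '' B, hq.isOpenMap _ Metric.isOpen_ball, ⟨x, hxB, rfl⟩,
    SimplyConnectedSpace.ofContractible _, ?_⟩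
  have hJx : ∀ z ∈ B, JoinedIn B z x := by
    intro z hz
    refine ⟨⟨⟨fun t => (H (⟨z, hz⟩, t) : X), by fun_prop⟩, ?_, ?_⟩, ?_⟩
    · simp [hH0]
    · simp [hH1]
    · intro t
      exact (H (⟨z, hz⟩, t)).2
  rintro a c ⟨a', ha', haa⟩ ⟨c', hc', hcc⟩
  obtain ⟨g, hg⟩ := (hqr a' a).1 haa
  let m : X → X := fun z => ⟨ρ g z, hmaps g z.2⟩
  have hm : Continuous m :=
    Continuous.subtype_mk ((hρ g).comp continuous_subtype_val) _
  have hqm : ∀ z, q (m z) = q z := fun z => ((hqr z (m z)).2 ⟨g, rfl⟩).symm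
  have hma : m a' = a := Subtype.ext hg
  refine ⟨m c', (hqm c').trans hcc, ?_⟩
  -- translate by `g` the path from `a'` to `c'` through the centre
  have hJ := ((hJx a' ha').trans (hJx c' hc').symm).map hm
  rw [hma] at hJ
  refine hJ.mono ?_
  rintro _ ⟨z, hz, rfl⟩
  exact ⟨z, hz, (hqm z).symm⟩

end Action

/-! ### Simplicial complexes -/

/-- A finite simplicial complex is locally conical: the faces not containing `x` stay at positive
distance from `x`, and every other face contains the segments from `x` to its points. -/
theorem eventually_segment_subset_space {E : Type*} [NormedAddCommGroup E] [NormedSpace ℝ E]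
    (K : Geometry.SimplicialComplex ℝ E) (hK : K.faces.Finite) (x : E) :
    ∀ᶠ z in 𝓝[K.space] x, segment ℝ x z ⊆ K.space := by
  have h : ∀ᶠ z in 𝓝 x, ∀ s ∈ K.faces, z ∈ convexHull ℝ (s : Set E) →
      x ∈ convexHull ℝ (s : Set E) := by
    rw [Filter.eventually_all_finite hK]
    intro s _
    by_cases hx : x ∈ convexHull ℝ (s : Set E)
    · exact Filter.Eventually.of_forall fun _ _ => hx
    · have hc : IsClosed (convexHull ℝ (s : Set E)) :=
        (s.finite_toSet.isCompact_convexHull (𝕜 := ℝ)).isClosed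
      filter_upwards [hc.isOpen_compl.mem_nhds hx] with z hz h using absurd h hz
  filter_upwards [nhdsWithin_le_nhds h, self_mem_nhdsWithin] with z hz hzK
  obtain ⟨s, hs, hzs⟩ := K.mem_space_iff.1 hzK
  exact ((convex_convexHull ℝ _).segment_subset (hz s hs hzs) hzs).trans
    (K.convexHull_subset_space hs)

/-- **Let `T` be a finite simplicial complex with a simplicial action of a finite group `G`.
If the fundamental group of the realization `|T|` is finite, then the fundamental group of the
quotient `|T|/G` is also finite.**

The finite simplicial complex is a geometric simplicial complex `K` in Euclidean space with
finitely many faces; the simplicial `G`-action is given by affine automorphisms `ρ g` of the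
ambient space mapping faces of `K` to faces of `K` (hence mapping `|T| = K.space` to itself).
The quotient `|T|/G` carries the quotient topology. -/
theorem pi1_quotient_finite_of_pi1_finite {N : ℕ}
    (K : Geometry.SimplicialComplex ℝ (EuclideanSpace ℝ (Fin N)))
    (hKfin : K.faces.Finite)
    (G : Type) [Group G] [Finite G]
    (ρ : G →* (EuclideanSpace ℝ (Fin N) ≃ᵃ[ℝ] EuclideanSpace ℝ (Fin N)))
    (hsimp : ∀ g : G, ∀ s ∈ K.faces, ∃ t ∈ K.faces, ρ g '' (s : Set (EuclideanSpace ℝ (Fin N))) = t)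
    (hmaps : ∀ g : G, Set.MapsTo (ρ g) K.space K.space)
    (hπ : ∀ x : ↥K.space, Finite (FundamentalGroup ↥K.space x))
    (y : Quot fun a b : ↥K.space => ∃ g : G, ρ g (a : EuclideanSpace ℝ (Fin N)) = b) :
    Finite (FundamentalGroup
      (Quot fun a b : ↥K.space => ∃ g : G, ρ g (a : EuclideanSpace ℝ (Fin N)) = b) y) := by
  let r : K.space → K.space → Prop :=
    fun a b => ∃ g : G, ρ g (a : EuclideanSpace ℝ (Fin N)) = b
  have hρ : ∀ g, Continuous (ρ g) := fun g => (ρ g).toAffineMap.continuous_of_finiteDimensional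
  have hequiv : Equivalence r := by
    refine ⟨fun a => ⟨1, by simp⟩, ?_, ?_⟩
    · rintro a b ⟨g, hg⟩
      refine ⟨g⁻¹, ?_⟩
      rw [← hg, ← Function.comp_apply (f := ρ g⁻¹), ← AffineEquiv.coe_mul, ← map_mul]
      simp
    · rintro a b c ⟨g, hg⟩ ⟨h, hh⟩
      exact ⟨h * g, by rw [map_mul, AffineEquiv.coe_mul, Function.comp_apply, hg, hh]⟩
  let q : C(K.space, Quot r) := ⟨Quot.mk r, continuous_quot_mk⟩
  have hqr : ∀ a b, q a = q b ↔ r a b := fun a b => hequiv.quot_mk_eq_iff a b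
  have hq : IsOpenQuotientMap q := by
    refine ⟨Quot.mk_surjective, q.continuous, fun U hU => ?_⟩
    -- the saturation of `U` is the union of the preimages of `U` under the group elements
    have hsat : q ⁻¹' (q '' U) =
        ⋃ g : G, (fun z : K.space => (⟨ρ g z, hmaps g z.2⟩ : K.space)) ⁻¹' U := by
      ext z
      simp only [Set.mem_preimage, Set.mem_image, Set.mem_iUnion]
      constructor
      · rintro ⟨u, hu, huz⟩
        obtain ⟨g, hg⟩ := (hqr z u).1 huz.symm
        refine ⟨g, ?_⟩
        convert hu
      · rintro ⟨g, hg⟩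
        exact ⟨_, hg, ((hqr z _).2 ⟨g, rfl⟩).symm⟩
    change IsOpen (q ⁻¹' (q '' U))
    rw [hsat]
    exact isOpen_iUnion fun g =>
      hU.preimage (Continuous.subtype_mk ((hρ g).comp continuous_subtype_val) _)
  obtain ⟨x, rfl⟩ := hq.surjective y
  refine finite_pi1_of_pathLifts (q := q) (fun p => pathLifts_of_local (fun y => ?_) p)
    (fun y => ?_) hπ x
  · obtain ⟨x, rfl⟩ := hq.surjective y
    obtain ⟨V, hVo, hxV, hV, hJ⟩ := exists_good_nhd ρ hρ hmaps
      (fun x _ => eventually_segment_subset_space K hKfin x) hq hqr x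
    exact ⟨V, hVo, hxV, fun z w p hp =>
      pathLifts_of_isSimplyConnected hV hJ hq.surjective p hp⟩
  · obtain ⟨x, rfl⟩ := hq.surjective y
    refine (Set.finite_range fun g : G => (⟨ρ g x, hmaps g x.2⟩ : K.space)).subset ?_
    intro z hz
    obtain ⟨g, hg⟩ := (hqr x z).1 hz.symm
    exact ⟨g, Subtype.ext hg⟩
end

section
/- Let E be a connected topological space that is a finite union of closed path-connected subspaces E_i, with all nonempty intersections path-connected. Then there is a natural surjection π₁(E) ↠ π₁(N), where N is the (realization of the) nerve of the cover {E_i}. -/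
/-!
The proof constructs a covering of `X` from the fundamental group of the nerve `N` and reads off
the surjection from its deck transformations, so that no partition of unity is needed (`X` is an
arbitrary topological space, and the sets `E i` are closed rather than open).

For `z : X` the set of all `w` with `{i | w ∈ E i} ⊆ {i | z ∈ E i}` is an open neighbourhood of
`z`, since the cover is finite and closed. Choose an index `v z` with `z ∈ E (v z)`. The indices
`v w`, for `w` in this neighbourhood, all lie in `{i | z ∈ E i}`, which is a simplex of the nerve.
Joining every point of `N` to the base point `y` turns the straight edge from vertex `i` to vertex
`j` into an element `edge i j` of `π₁(N, y)`, and `edge i j * edge j k = edge i k` whenever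
`i, j, k` span a simplex. Hence `(a, b) ↦ edge (v a) (v b)` is a locally defined cocycle on `X`
(`LocalCocycle`), and it glues a principal bundle with discrete fibre `π₁(N, y)`, i.e. a covering
of `X` with deck group `π₁(N, y)` (`LocalCocycle.isQuotientCoveringMap`). A covering of this kind
with path-connected total space gives a surjection from `π₁(X, x)` onto the deck group
(`exists_surjective_of_joined`).

It remains to connect the total space. Over each `E i` the covering is trivial, with sheets
indexed by `g : π₁(N, y)`; each sheet is path-connected because `E i` is. At a point of
`E i ∩ E j` the sheet `g` over `E i` meets the sheet `g * edge i j` over `E j`. A path `γ` in `N`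
from vertex `i` to vertex `j` is, up to homotopy, an edge path: subdivide it so that each piece
lies in the open star of a vertex, and straighten the pieces inside the closed stars. Thus the
sheet `g` over `E i` can be joined to the sheet `g * [γ]` over `E j` (`sheetJoined_of_path`).
Every element of `π₁(N, y)` arises as such a `[γ]`, because `N` is path-connected, which in turn
follows from the connectedness of `X`; so any two points of the total space are joined.

The product in `π₁(N, y)` is converted to the order of concatenation by passing to the opposite
group.
-/

open scoped BigOperators

/-- The geometric realization of the nerve (dual complex) of a finite family of subsets
`E : I → Set X`: the subspace of the standard simplex on the vertex set `I` consisting of the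
weight functions whose support is a simplex of the nerve, i.e. spans a subfamily with nonempty
intersection. -/
def nerveRealization {X : Type*} [TopologicalSpace X] {I : Type*} [Fintype I]
    (E : I → Set X) : Set (I → ℝ) :=
  {f | (∀ i, 0 ≤ f i) ∧ ∑ i, f i = 1 ∧ (⋂ i ∈ Function.support f, E i).Nonempty}

namespace NerveCover
open Topology Bundle

/-! ### Coverings glued from a local cocycle -/

section Cocycle

variable {X : Type*} [TopologicalSpace X] {K : Type*} [Group K]

/-- A `K`-valued transition function on `X`, together with a neighbourhood of each point on which
it satisfies the cocycle identity. The values of `val` on pairs that do not share such a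
neighbourhood are irrelevant. -/
structure LocalCocycle (X : Type*) [TopologicalSpace X] (K : Type*) [Group K] where
  nbhd : X → Set X
  isOpen_nbhd : ∀ x, IsOpen (nbhd x)
  mem_nbhd : ∀ x, x ∈ nbhd x
  val : X → X → K
  mul_val : ∀ x, ∀ a ∈ nbhd x, ∀ b ∈ nbhd x, ∀ d ∈ nbhd x, val a b * val b d = val a d

namespace LocalCocycle

variable (c : LocalCocycle X K)

lemma val_self (x : X) : c.val x x = 1 := by
  have h := c.mul_val x x (c.mem_nbhd x) x (c.mem_nbhd x) x (c.mem_nbhd x)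
  exact mul_eq_left.mp h

lemma val_mul_val {x a b : X} (ha : a ∈ c.nbhd x) (hb : b ∈ c.nbhd x) :
    c.val a b * c.val b a = 1 := by
  rw [c.mul_val x a ha b hb a ha, c.val_self]

/-- The bundle over `X` with fibre `K`, trivialized over each `nbhd i`, obtained by gluing along
`val`. The trivialization with index `i` shows an element `g` of the fibre over `x` (in the
coordinates of index `x`) as `g * val x i`; the group `K` acts by left multiplication. -/
@[reducible] def core [TopologicalSpace K] [DiscreteTopology K] : FiberBundleCore X X K where
  baseSet := c.nbhd
  isOpen_baseSet := c.isOpen_nbhd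
  indexAt := id
  mem_baseSet_at := c.mem_nbhd
  coordChange i j x g := g * (c.val i x * c.val x j)
  coordChange_self i x hx g := by
    rw [c.val_mul_val (c.mem_nbhd i) hx, mul_one]
  continuousOn_coordChange i j := by
    rintro ⟨x₀, g₀⟩ ⟨⟨hi, hj⟩, -⟩
    refine ContinuousAt.continuousWithinAt ?_
    refine (continuousAt_const (y := g₀ * (c.val i x₀ * c.val x₀ j))).congr ?_
    have hg : ∀ᶠ g in 𝓝 g₀, g = g₀ := by simp [nhds_discrete]
    have hx : ∀ᶠ x in 𝓝 x₀, x ∈ c.nbhd x₀ ∧ x ∈ c.nbhd i ∧ x ∈ c.nbhd j :=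
      Filter.Eventually.and ((c.isOpen_nbhd x₀).mem_nhds (c.mem_nbhd x₀))
        (Filter.Eventually.and ((c.isOpen_nbhd i).mem_nhds hi) ((c.isOpen_nbhd j).mem_nhds hj))
    filter_upwards [hx.prod_nhds hg]
    rintro ⟨x, g⟩ ⟨⟨h0, h1, h2⟩, rfl⟩
    have e1 := c.mul_val i i (c.mem_nbhd i) x₀ hi x h1
    have e2 := c.mul_val j x h2 x₀ hj j (c.mem_nbhd j)
    have e3 := c.val_mul_val (c.mem_nbhd x₀) h0
    dsimp only
    rw [← e1, ← e2]
    congr 1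
    calc _ = c.val i x₀ * 1 * c.val x₀ j := by group
      _ = _ := by rw [← e3]; group
  coordChange_comp i j k x hx g := by
    have e := c.val_mul_val (x := j) hx.1.2 (c.mem_nbhd j)
    calc _ = g * (c.val i x * (c.val x j * c.val j x) * c.val x k) := by group
      _ = _ := by rw [e, mul_one]

variable [TopologicalSpace K] [DiscreteTopology K]

/-- The coordinate of a point of the total space in the fibre over its projection. -/
def coord (p : c.core.TotalSpace) : K := p.2

/-- The point of the total space over `x` with coordinate `g`. -/
def pt (x : X) (g : K) : c.core.TotalSpace := ⟨x, g⟩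

lemma pt_coord (p : c.core.TotalSpace) : c.pt p.1 (c.coord p) = p := rfl

lemma coord_pt (x : X) (g : K) : c.coord (c.pt x g) = g := rfl

/-- In the coordinates `coord`, which jump as the base point moves, continuity of a map into the
total space means that the coordinate changes locally by the cocycle. -/
lemma continuousAt_total_iff {Y : Type*} [TopologicalSpace Y] (f : Y → c.core.TotalSpace) (t : Y)
    (hf : ContinuousAt (fun s => (f s).proj) t) :
    ContinuousAt f t ↔ ∀ᶠ s in 𝓝 t,
      c.coord (f s) = c.coord (f t) * c.val (f t).1 (f s).1 := by
  rw [FiberBundle.continuousAt_totalSpace, and_iff_right hf, ContinuousAt, nhds_discrete K,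
    Filter.tendsto_pure]
  have h1 : ∀ᶠ s in 𝓝 t, (f s).1 ∈ c.nbhd (f t).1 :=
    hf ((c.isOpen_nbhd _).mem_nhds (c.mem_nbhd _))
  refine Filter.eventually_congr ?_
  filter_upwards [h1] with s hs
  have e := c.val_mul_val (c.mem_nbhd _) hs
  have e0 := c.val_self (f s).1
  have e0' := c.val_self (f t).1
  change c.coord (f s) * (c.val (f s).1 (f s).1 * c.val (f s).1 (f t).1) =
    c.coord (f t) * (c.val (f t).1 (f t).1 * c.val (f t).1 (f t).1) ↔ _
  rw [e0, e0', one_mul, one_mul, mul_one, eq_inv_of_mul_eq_one_left e, eq_mul_inv_iff_mul_eq]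

lemma continuous_pt {Y : Type*} [TopologicalSpace Y] {f : Y → X} (hf : Continuous f) (h : Y → K)
    (hh : ∀ t, ∀ᶠ s in 𝓝 t, h s = h t * c.val (f t) (f s)) :
    Continuous fun t => c.pt (f t) (h t) :=
  continuous_iff_continuousAt.2 fun t =>
    (c.continuousAt_total_iff _ t hf.continuousAt).2 (hh t)

instance : MulAction K c.core.TotalSpace where
  smul k p := c.pt p.1 (k * c.coord p)
  one_smul p := congrArg (c.pt p.1) (one_mul (c.coord p))
  mul_smul k l p := congrArg (c.pt p.1) (mul_assoc k l (c.coord p))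

lemma smul_def (k : K) (p : c.core.TotalSpace) : k • p = c.pt p.1 (k * c.coord p) := rfl

/-- The glued bundle is a principal covering: `K` acts properly discontinuously, and its orbits
are the fibres. -/
lemma isQuotientCoveringMap : IsQuotientCoveringMap c.core.proj K := by
  have hp : Continuous c.core.proj := c.core.continuous_proj
  rw [isQuotientCoveringMap_iff_isCoveringMap_and]
  refine ⟨FiberBundle.isCoveringMap, fun x => ⟨c.pt x 1, rfl⟩, ⟨fun k => ?_⟩, ⟨fun k l p h => ?_⟩,
    fun {p q} => ⟨fun h => ?_, ?_⟩⟩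
  · refine c.continuous_pt hp _ fun p => ?_
    filter_upwards [(c.continuousAt_total_iff id p hp.continuousAt).1 continuousAt_id] with q hq
    rw [mul_assoc]
    exact congrArg (k * ·) hq
  · exact mul_right_cancel (congrArg c.coord h : k * c.coord p = l * c.coord p)
  · refine ⟨c.coord p * (c.coord q)⁻¹, ?_⟩
    change c.pt (c.core.proj q) _ = c.pt (c.core.proj p) (c.coord p)
    rw [← h, inv_mul_cancel_right]
  · rintro ⟨k, rfl⟩
    rfl

end LocalCocycle

/-- Monodromy of a path-connected principal covering is onto the structure group. The topology on
`K` is not part of the data, so the hypothesis is stated for every discrete topology on `K`. -/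
theorem exists_surjective_of_joined (c : LocalCocycle X K) (x : X)
    (h : ∀ [TopologicalSpace K] [DiscreteTopology K], ∀ p q : c.core.TotalSpace, Joined p q) :
    ∃ φ : FundamentalGroup X x →* Kᵐᵒᵖ, Function.Surjective φ := by
  let _ : TopologicalSpace K := ⊥
  have : DiscreteTopology K := ⟨rfl⟩
  have : PathConnectedSpace c.core.TotalSpace := ⟨⟨c.pt x 1⟩, h⟩
  exact ⟨_, c.isQuotientCoveringMap.fundamentalGroupToMulOpposite_surjective
    (⟨c.pt x 1, rfl⟩ : c.core.proj ⁻¹' {x})⟩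

end Cocycle

/-! ### Faces, closed stars and straight paths in the nerve -/

section Nerve

open CategoryTheory Set Function

variable {X : Type*} [TopologicalSpace X] {I : Type*} [Fintype I] {E : I → Set X}

/-- The closed face of the full simplex on `I` spanned by `J`. -/
def face (J : Set I) : Set (I → ℝ) :=
  {f | (∀ i, 0 ≤ f i) ∧ ∑ i, f i = 1 ∧ support f ⊆ J}

/-- The closed star of the vertex `k` in the nerve: weight functions whose support together with
`k` is a simplex. -/
def closedStar (E : I → Set X) (k : I) : Set (I → ℝ) :=
  {f | (∀ i, 0 ≤ f i) ∧ ∑ i, f i = 1 ∧ (⋂ i ∈ insert k (support f), E i).Nonempty}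

lemma convex_face (J : Set I) : Convex ℝ (face J) := by
  rintro f ⟨hf, hf1, hfJ⟩ g ⟨hg, hg1, hgJ⟩ s t hs ht hst
  refine ⟨fun i => ?_, ?_, fun i hi => ?_⟩
  · have := hf i; have := hg i
    simp only [Pi.add_apply, Pi.smul_apply, smul_eq_mul]; positivity
  · simp [Finset.sum_add_distrib, ← Finset.mul_sum, hf1, hg1, hst]
  · by_contra hiJ
    have h1 : f i = 0 := notMem_support.1 fun h => hiJ (hfJ h)
    have h2 : g i = 0 := notMem_support.1 fun h => hiJ (hgJ h)
    exact hi (by simp [h1, h2])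

lemma face_subset {J : Set I} (hJ : (⋂ i ∈ J, E i).Nonempty) : face J ⊆ nerveRealization E :=
  fun _ hf => ⟨hf.1, hf.2.1, hJ.mono (biInter_subset_biInter_left hf.2.2)⟩

lemma closedStar_subset (k : I) : closedStar E k ⊆ nerveRealization E :=
  fun _ hf => ⟨hf.1, hf.2.1, hf.2.2.mono (biInter_subset_biInter_left (subset_insert _ _))⟩

lemma mem_face_support (f : nerveRealization E) : (f : I → ℝ) ∈ face (support f.1) :=
  ⟨f.2.1, f.2.2.1, subset_rfl⟩

lemma mem_closedStar_of_ne {f : nerveRealization E} {k : I} (h : f.1 k ≠ 0) : f.1 ∈ closedStar E k := by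
  refine ⟨f.2.1, f.2.2.1, ?_⟩
  rw [insert_eq_of_mem (mem_support.2 h)]
  exact f.2.2.2

lemma exists_ne (f : nerveRealization E) : ∃ i, f.1 i ≠ 0 := by
  by_contra! h
  have := f.2.2.1
  simp [h] at this

open Classical in
lemma single_mem_face {J : Set I} {i : I} (hi : i ∈ J) : Pi.single i (1 : ℝ) ∈ face J := by
  refine ⟨fun j => ?_, by simp, fun j hj => ?_⟩
  · by_cases h : j = i
    · subst h; simp
    · simp [h]
  · by_contra h
    have : j ≠ i := fun e => h (e ▸ hi)
    simp [this] at hj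

open Classical in
lemma starConvex_closedStar (k : I) : StarConvex ℝ (Pi.single k 1) (closedStar E k) := by
  rintro g ⟨hg, hg1, hgJ⟩ s t hs ht hst
  have h := convex_face (insert k (support g)) (single_mem_face (mem_insert k _))
    (⟨hg, hg1, subset_insert _ _⟩ : g ∈ face (insert k (support g))) hs ht hst
  exact ⟨h.1, h.2.1, hgJ.mono
    (biInter_subset_biInter_left (insert_subset (mem_insert _ _) h.2.2))⟩

open Classical in
/-- The vertex of the nerve with index `i`. -/
noncomputable def vtx (hne : ∀ i, (E i).Nonempty) (i : I) : nerveRealization E :=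
  ⟨Pi.single i 1, face_subset (J := {i}) (by simpa using hne i) (single_mem_face rfl)⟩

/-- The homotopy class `q` of paths in the nerve has a representative inside `C`. -/
def HasRep (C : Set (I → ℝ)) {a b : nerveRealization E}
    (q : FundamentalGroupoid.mk a ⟶ FundamentalGroupoid.mk b) : Prop :=
  ∃ γ : Path a b, (∀ t, (γ t).1 ∈ C) ∧ FundamentalGroupoid.fromPath (.mk γ) = q

variable {a b d : nerveRealization E}

lemma HasRep.mono {C D : Set (I → ℝ)} (h : C ⊆ D)
    {q : FundamentalGroupoid.mk a ⟶ FundamentalGroupoid.mk b} (hq : HasRep C q) : HasRep D q := by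
  obtain ⟨γ, h1, h2⟩ := hq
  exact ⟨γ, fun t => h (h1 t), h2⟩

lemma HasRep.comp {C : Set (I → ℝ)}
    {q : FundamentalGroupoid.mk a ⟶ FundamentalGroupoid.mk b}
    {r : FundamentalGroupoid.mk b ⟶ FundamentalGroupoid.mk d}
    (hq : HasRep C q) (hr : HasRep C r) : HasRep C (q ≫ r) := by
  obtain ⟨γ, h1, rfl⟩ := hq
  obtain ⟨δ, h2, rfl⟩ := hr
  refine ⟨γ.trans δ, fun t => ?_, rfl⟩
  rw [Path.trans_apply]
  split_ifs
  exacts [h1 _, h2 _]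

/-- A star-convex set is simply connected, so homotopy classes with representatives in it are
determined by their end points. -/
lemma HasRep.eq {C : Set (I → ℝ)} {x : I → ℝ} (hC : StarConvex ℝ x C)
    (hsub : C ⊆ nerveRealization E)
    {q r : FundamentalGroupoid.mk a ⟶ FundamentalGroupoid.mk b}
    (hq : HasRep C q) (hr : HasRep C r) : q = r := by
  obtain ⟨γ, h1, rfl⟩ := hq
  obtain ⟨δ, h2, rfl⟩ := hr
  have ha : a.1 ∈ C := by simpa using h1 0
  have hb : b.1 ∈ C := by simpa using h1 1
  have := hC.contractibleSpace ⟨_, ha⟩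
  let inc : C(C, nerveRealization E) := ⟨inclusion hsub, continuous_inclusion hsub⟩
  let lift (γ : Path a b) (h : ∀ t, (γ t).1 ∈ C) : Path (⟨a.1, ha⟩ : C) ⟨b.1, hb⟩ :=
    { toFun := fun t => ⟨(γ t).1, h t⟩
      continuous_toFun := by fun_prop
      source' := by simp
      target' := by simp }
  exact Quotient.sound
    ((SimplyConnectedSpace.paths_homotopic (lift γ h1) (lift δ h2)).map inc)

open Classical in
/-- The class of the straight path from `a` to `b` if the segment lies in the nerve, and of an
arbitrary path otherwise. Making it total allows it to serve also as the choice of a path from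
the base point to every point. -/
noncomputable def seg [PathConnectedSpace (nerveRealization E)] (a b : nerveRealization E) :
    FundamentalGroupoid.mk a ⟶ FundamentalGroupoid.mk b :=
  if h : ∃ γ : Path a b, ∀ t, (γ t).1 ∈ segment ℝ a.1 b.1 then
    FundamentalGroupoid.fromPath (.mk h.choose)
  else FundamentalGroupoid.fromPath (.mk (PathConnectedSpace.somePath a b))

lemma exists_path_segment (h : segment ℝ a.1 b.1 ⊆ nerveRealization E) :
    ∃ γ : Path a b, ∀ t, (γ t).1 ∈ segment ℝ a.1 b.1 := by
  obtain ⟨γ, hγ⟩ := JoinedIn.of_segment_subset (subset_refl (segment ℝ a.1 b.1))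
  exact ⟨{ toFun := fun t => ⟨γ t, h (hγ t)⟩
           continuous_toFun := by fun_prop
           source' := by simp
           target' := by simp }, hγ⟩

section PC
variable [PathConnectedSpace (nerveRealization E)]

lemma hasRep_seg (h : segment ℝ a.1 b.1 ⊆ nerveRealization E) :
    HasRep (segment ℝ a.1 b.1) (seg a b) := by
  have h' := exists_path_segment h
  refine ⟨h'.choose, h'.choose_spec, ?_⟩
  rw [seg, dif_pos h']

lemma seg_comp {J : Set I} (hJ : (⋂ i ∈ J, E i).Nonempty)
    (ha : a.1 ∈ face J) (hb : b.1 ∈ face J) (hd : d.1 ∈ face J) :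
    seg a b ≫ seg b d = seg a d := by
  have key : ∀ {a b : nerveRealization E}, a.1 ∈ face J → b.1 ∈ face J →
      HasRep (face J) (seg a b) := fun {a b} ha hb => by
    have h := (convex_face J).segment_subset ha hb
    exact (hasRep_seg (h.trans (face_subset hJ))).mono h
  exact HasRep.eq ((convex_face J).starConvex ha) (face_subset hJ)
    ((key ha hb).comp (key hb hd)) (key ha hd)

lemma seg_self : seg a a = 𝟙 _ := by
  have h := seg_comp a.2.2.2 (mem_face_support a) (mem_face_support a) (mem_face_support a)
  rw [← cancel_epi (seg a a), h, Category.comp_id]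

/-- A path inside the closed star of `k` is homotopic to the one through the vertex `k`. -/
lemma HasRep.eq_seg_comp_seg (hne : ∀ i, (E i).Nonempty) {k : I}
    {q : FundamentalGroupoid.mk a ⟶ FundamentalGroupoid.mk b} (hq : HasRep (closedStar E k) q) :
    q = seg a (vtx hne k) ≫ seg (vtx hne k) b := by
  obtain ⟨γ, h1, -⟩ := id hq
  have ha : a.1 ∈ closedStar E k := by simpa using h1 0
  have hb : b.1 ∈ closedStar E k := by simpa using h1 1
  have h2 := (starConvex_closedStar (E := E) k).segment_subset hb
  have h3 := (starConvex_closedStar (E := E) k).segment_subset ha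
  rw [segment_symm] at h3
  exact hq.eq (starConvex_closedStar k) (closedStar_subset k)
    (((hasRep_seg (h3.trans (closedStar_subset k))).mono h3).comp
      ((hasRep_seg (h2.trans (closedStar_subset k))).mono h2))

/-- The element of the fundamental group at `y` obtained from a path class by joining its ends to
`y` along the paths `seg`. The opposite group carries the order of concatenation: see
`conj_comp`. -/
noncomputable def conj (y : nerveRealization E)
    (q : FundamentalGroupoid.mk a ⟶ FundamentalGroupoid.mk b) :
    (FundamentalGroup (nerveRealization E) y)ᵐᵒᵖ :=
  .op (seg y a ≫ q ≫ inv (seg y b))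

lemma conj_comp (y : nerveRealization E)
    (q : FundamentalGroupoid.mk a ⟶ FundamentalGroupoid.mk b)
    (r : FundamentalGroupoid.mk b ⟶ FundamentalGroupoid.mk d) :
    conj y (q ≫ r) = conj y q * conj y r := by
  have h : seg y a ≫ (q ≫ r) ≫ inv (seg y d) =
      (seg y a ≫ q ≫ inv (seg y b)) ≫ (seg y b ≫ r ≫ inv (seg y d)) := by simp
  exact congrArg MulOpposite.op h

lemma conj_id (y : nerveRealization E) : conj y (𝟙 (FundamentalGroupoid.mk a)) = 1 := by
  have := conj_comp y (𝟙 (FundamentalGroupoid.mk a)) (𝟙 _)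
  rw [Category.comp_id] at this
  exact (mul_eq_left.1 this.symm)

lemma conj_surjective (y a b : nerveRealization E)
    (k : (FundamentalGroup (nerveRealization E) y)ᵐᵒᵖ) :
    ∃ γ : Path a b, conj y (FundamentalGroupoid.fromPath (.mk γ)) = k := by
  have ⟨γ, hγ⟩ := Path.Homotopic.Quotient.mk_surjective
    (inv (seg y a) ≫ k.unop ≫ seg y b : FundamentalGroupoid.mk a ⟶ FundamentalGroupoid.mk b)
  refine ⟨γ, ?_⟩
  rw [hγ]
  apply MulOpposite.unop_injective
  simp [conj]

end PC

/-! ### Path-connectedness of the nerve -/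

/-- Near `z` only those members of the cover that contain `z` occur, since the others are closed
and finite in number. -/
lemma isOpen_setOf_imp (hclosed : ∀ i, IsClosed (E i)) (z : X) :
    IsOpen {w | ∀ i, w ∈ E i → z ∈ E i} := by
  rw [ofPred_forall]
  refine isOpen_iInter_of_finite fun i => ?_
  by_cases h : z ∈ E i
  · simp [h]
  · simpa [h, compl_def] using (hclosed i).isOpen_compl

lemma joined_of_mem_face {J : Set I} (hJ : (⋂ i ∈ J, E i).Nonempty)
    (ha : a.1 ∈ face J) (hb : b.1 ∈ face J) : Joined a b := by
  obtain ⟨γ, -⟩ := exists_path_segment (E := E)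
    (((convex_face J).segment_subset ha hb).trans (face_subset hJ))
  exact ⟨γ⟩

/-- The path component of the vertex `v z` is a locally constant function of `z : X`, hence
constant. -/
lemma pathConnectedSpace_nerveRealization [ConnectedSpace X] (hclosed : ∀ i, IsClosed (E i))
    (hne : ∀ i, (E i).Nonempty) {v : X → I} (hv : ∀ z, z ∈ E (v z)) :
    PathConnectedSpace (nerveRealization E) := by
  have hvtx : ∀ {z : X} {i j : I}, z ∈ E i → z ∈ E j → Joined (vtx hne i) (vtx hne j) :=
    fun {z i j} hi hj => joined_of_mem_face (J := {k | z ∈ E k}) ⟨z, mem_iInter₂.2 fun _ h => h⟩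
      (single_mem_face hi) (single_mem_face hj)
  have hloc : IsLocallyConstant
      fun z => (Quotient.mk (pathSetoid _) (vtx hne (v z)) :
        ZerothHomotopy (nerveRealization E)) := by
    rw [IsLocallyConstant.iff_eventually_eq]
    intro z
    filter_upwards [(isOpen_setOf_imp hclosed z).mem_nhds fun _ h => h] with w hw
    exact Quotient.sound (hvtx (hw _ (hv w)) (hv z))
  have hall : ∀ z w, Joined (vtx hne (v z)) (vtx hne (v w)) := fun z w =>
    Quotient.exact (hloc.apply_eq_of_preconnectedSpace z w)
  have hpt : ∀ f : nerveRealization E, ∃ z, Joined f (vtx hne (v z)) := fun f => by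
    obtain ⟨i, hi⟩ := exists_ne f
    obtain ⟨z, hz⟩ := hne i
    exact ⟨z, (joined_of_mem_face f.2.2.2 (mem_face_support f)
      (single_mem_face hi)).trans (hvtx hz (hv z))⟩
  obtain ⟨x⟩ := (inferInstance : Nonempty X)
  refine ⟨⟨vtx hne (v x)⟩, fun f g => ?_⟩
  obtain ⟨z, hz⟩ := hpt f
  obtain ⟨w, hw⟩ := hpt g
  exact (hz.trans (hall z w)).trans hw.symm

/-! ### Connectedness of the covering -/

section Lift
variable [PathConnectedSpace (nerveRealization E)]

/-- The element of the fundamental group of the nerve given by the edge from vertex `i` to vertex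
`j`. It is meaningful only if `E i` meets `E j`. -/
noncomputable def edge (hne : ∀ i, (E i).Nonempty) (y : nerveRealization E) (i j : I) :
    (FundamentalGroup (nerveRealization E) y)ᵐᵒᵖ :=
  conj y (seg (vtx hne i) (vtx hne j))

lemma edge_self (hne : ∀ i, (E i).Nonempty) (y : nerveRealization E) (i : I) :
    edge hne y i i = 1 := by
  rw [edge, seg_self, conj_id]

lemma edge_mul_edge (hne : ∀ i, (E i).Nonempty) (y : nerveRealization E) {z : X} {i j k : I}
    (hi : z ∈ E i) (hj : z ∈ E j) (hk : z ∈ E k) :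
    edge hne y i j * edge hne y j k = edge hne y i k := by
  have h : seg (vtx hne i) (vtx hne j) ≫ seg (vtx hne j) (vtx hne k) =
      seg (vtx hne i) (vtx hne k) :=
    seg_comp (J := {l | z ∈ E l}) ⟨z, mem_iInter₂.2 fun _ h => h⟩ (single_mem_face hi)
      (single_mem_face hj) (single_mem_face hk)
  rw [edge, edge, edge, ← conj_comp, h]

/-- The cocycle on `X` given by the edges of the nerve between the chosen indices `v`. -/
noncomputable def cocycle (hclosed : ∀ i, IsClosed (E i)) (hne : ∀ i, (E i).Nonempty)
    (y : nerveRealization E) {v : X → I} (hv : ∀ z, z ∈ E (v z)) :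
    LocalCocycle X (FundamentalGroup (nerveRealization E) y)ᵐᵒᵖ where
  nbhd z := {w | ∀ i, w ∈ E i → z ∈ E i}
  isOpen_nbhd := isOpen_setOf_imp hclosed
  mem_nbhd _ _ h := h
  val a b := edge hne y (v a) (v b)
  mul_val _ a ha b hb d hd :=
    edge_mul_edge hne y (ha _ (hv a)) (hb _ (hv b)) (hd _ (hv d))

variable (hclosed : ∀ i, IsClosed (E i)) (hne : ∀ i, (E i).Nonempty)
  (y : nerveRealization E) {v : X → I} (hv : ∀ z, z ∈ E (v z))
  [TopologicalSpace (FundamentalGroup (nerveRealization E) y)ᵐᵒᵖ]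
  [DiscreteTopology (FundamentalGroup (nerveRealization E) y)ᵐᵒᵖ]

/-- The sheet `g` over `E i` consists of the points over `a ∈ E i` with coordinate
`g * edge i (v a)`. This relation says that every point of the sheet `g` over `E i` is joined to
every point of the sheet `g'` over `E j` by a path in the total space. -/
def SheetJoined (i : I) (g : (FundamentalGroup (nerveRealization E) y)ᵐᵒᵖ)
    (j : I) (g' : (FundamentalGroup (nerveRealization E) y)ᵐᵒᵖ) : Prop :=
  ∀ a ∈ E i, ∀ b ∈ E j, Joined ((cocycle hclosed hne y hv).pt a (g * edge hne y i (v a)))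
    ((cocycle hclosed hne y hv).pt b (g' * edge hne y j (v b)))

variable {hclosed hne y hv}
variable {i j k : I} {g g' g'' : (FundamentalGroup (nerveRealization E) y)ᵐᵒᵖ}

/-- Over `E i` the covering is trivial, so paths in `E i` lift to each sheet. -/
lemma SheetJoined.refl (hpc : IsPathConnected (E i)) :
    SheetJoined hclosed hne y hv i g i g := by
  intro a ha b hb
  obtain ⟨γ, hγ⟩ := hpc.joinedIn a ha b hb
  refine ⟨⟨⟨fun t => (cocycle hclosed hne y hv).pt (γ t) (g * edge hne y i (v (γ t))), ?_⟩,
    ?_, ?_⟩⟩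
  · refine (cocycle hclosed hne y hv).continuous_pt γ.continuous _ fun t => ?_
    filter_upwards [γ.continuous.continuousAt.preimage_mem_nhds
      ((isOpen_setOf_imp hclosed (γ t)).mem_nhds fun _ h => h)] with s hs
    rw [mul_assoc]
    exact congrArg (g * ·) (edge_mul_edge hne y (hγ t) (hv (γ t)) (hs _ (hv (γ s)))).symm
  · simp
  · simp

lemma SheetJoined.trans (h : SheetJoined hclosed hne y hv i g j g')
    (h' : SheetJoined hclosed hne y hv j g' k g'') : SheetJoined hclosed hne y hv i g k g'' := by
  obtain ⟨z, hz⟩ := hne j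
  exact fun a ha b hb => (h a ha z hz).trans (h' z hz b hb)

/-- Over a common point of `E i` and `E j` the two sheets meet. -/
lemma SheetJoined.edge (hpc : ∀ i, IsPathConnected (E i)) {z : X} (hi : z ∈ E i) (hj : z ∈ E j) :
    SheetJoined hclosed hne y hv i g j (g * edge hne y i j) := by
  intro a ha b hb
  have h1 := SheetJoined.refl (hclosed := hclosed) (hne := hne) (hv := hv) (g := g) (hpc i)
    a ha z hi
  have h2 := SheetJoined.refl (hclosed := hclosed) (hne := hne) (hv := hv)
    (g := g * NerveCover.edge hne y i j) (hpc j) z hj b hb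
  rw [mul_assoc _ _ (NerveCover.edge hne y j (v z)), edge_mul_edge hne y hi hj (hv z)] at h2
  exact h1.trans h2

/-- A path `γ` in the nerve, completed to a path from vertex `i` to vertex `j` by segments inside
the simplices carrying its end points, transports the sheet `g` over `E i` to the sheet obtained
by multiplying with the class of that path. -/
lemma sheetJoined_of_path (hpc : ∀ i, IsPathConnected (E i)) (γ : Path a b)
    (ha : a.1 i ≠ 0) (hb : b.1 j ≠ 0) :
    SheetJoined hclosed hne y hv i g j (g * conj y (seg (vtx hne i) a ≫
      FundamentalGroupoid.fromPath (.mk γ) ≫ seg b (vtx hne j))) := by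
  have hcont : ∀ k : I, Continuous fun t => (γ t).1 k := fun k =>
    (continuous_apply k).comp (continuous_subtype_val.comp γ.continuous)
  -- Subdivide so that each piece stays in the open star `{f | f k ≠ 0}` of some vertex `k`.
  obtain ⟨t, ht0, htm, ⟨N, hN⟩, htc⟩ := exists_monotone_Icc_subset_open_cover_unitInterval
    (c := fun k : I => {t | (γ t).1 k ≠ 0})
    (fun k => isOpen_ne_fun (hcont k) continuous_const)
    (fun t _ => mem_iUnion.2 (exists_ne (γ t)))
  -- Induction on the number of pieces, for every vertex `j` of the carrier of the current point.
  have key : ∀ n, ∀ j, (γ (t n)).1 j ≠ 0 →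
      SheetJoined hclosed hne y hv i g j (g * conj y (seg (vtx hne i) (γ 0) ≫
        FundamentalGroupoid.fromPath (.mk (γ.subpath 0 (t n))) ≫ seg (γ (t n)) (vtx hne j))) := by
    intro n
    induction n with
    | zero =>
      intro j hj
      rw [ht0] at hj ⊢
      have hi : (γ 0).1 i ≠ 0 := by simpa using ha
      obtain ⟨z, hz⟩ := (γ 0).2.2.2
      rw [mem_iInter₂] at hz
      rw [Path.subpath_self]
      have h1 : FundamentalGroupoid.fromPath (.mk (Path.refl (γ 0))) = 𝟙 _ := rfl
      rw [h1, Category.id_comp, seg_comp (γ 0).2.2.2 (single_mem_face hi)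
        (mem_face_support _) (single_mem_face hj)]
      exact SheetJoined.edge hpc (hz i hi) (hz j hj)
    | succ n ih =>
      intro j hj
      obtain ⟨k, hk⟩ := htc n
      have hle : t n ≤ t (n + 1) := htm n.le_succ
      have hk0 : (γ (t n)).1 k ≠ 0 := hk (left_mem_Icc.2 hle)
      have hk1 : (γ (t (n + 1))).1 k ≠ 0 := hk (right_mem_Icc.2 hle)
      obtain ⟨z, hz⟩ := (γ (t (n + 1))).2.2.2
      rw [mem_iInter₂] at hz
      have hpiece : FundamentalGroupoid.fromPath (.mk (γ.subpath (t n) (t (n + 1)))) =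
          seg (γ (t n)) (vtx hne k) ≫ seg (vtx hne k) (γ (t (n + 1))) := by
        refine HasRep.eq_seg_comp_seg hne ⟨_, fun s => ?_, rfl⟩
        have hs := mem_range_self (f := γ.subpath (t n) (t (n + 1))) s
        rw [Path.range_subpath_of_le _ _ _ hle] at hs
        obtain ⟨u, hu, hus⟩ := hs
        rw [← hus]
        exact mem_closedStar_of_ne (hk hu)
      have hsplit : FundamentalGroupoid.fromPath (.mk (γ.subpath 0 (t (n + 1)))) =
          FundamentalGroupoid.fromPath (.mk (γ.subpath 0 (t n))) ≫
            FundamentalGroupoid.fromPath (.mk (γ.subpath (t n) (t (n + 1)))) :=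
        (Path.Homotopic.Quotient.eq.2
          ⟨Path.Homotopy.subpathTransSubpath γ 0 (t n) (t (n + 1))⟩).symm
      have hvk : seg (vtx hne k) (γ (t (n + 1))) ≫ seg (γ (t (n + 1))) (vtx hne j) =
          seg (vtx hne k) (vtx hne j) :=
        seg_comp (γ (t (n + 1))).2.2.2 (single_mem_face hk1) (mem_face_support _)
          (single_mem_face hj)
      have hstep := (ih k hk0).trans (SheetJoined.edge hpc (hz k hk1) (hz j hj))
      rw [mul_assoc, NerveCover.edge, ← conj_comp] at hstep
      rw [hsplit, hpiece]
      simp only [Category.assoc] at hstep ⊢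
      rwa [hvk]
  have h := key N j (by rw [hN N le_rfl]; simpa using hb)
  -- `γ.subpath 0 1` is a path from `γ 0` to `γ 1`, which equal `a` and `b` only propositionally.
  have hcast : ∀ {a' b'} (h0 : a' = a) (h1 : b' = b),
      seg (vtx hne i) a' ≫ FundamentalGroupoid.fromPath (.mk (γ.cast h0 h1)) ≫
        seg b' (vtx hne j) =
      seg (vtx hne i) a ≫ FundamentalGroupoid.fromPath (.mk γ) ≫ seg b (vtx hne j) := by
    rintro _ _ rfl rfl
    rfl
  rwa [hN N le_rfl, Path.subpath_zero_one, hcast γ.source γ.target] at h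

lemma joined_total (hpc : ∀ i, IsPathConnected (E i))
    (p q : (cocycle hclosed hne y hv).core.TotalSpace) : Joined p q := by
  -- Every point over `z` lies in the sheet over `E (v z)` indexed by its own coordinate.
  have hsheet : ∀ p : (cocycle hclosed hne y hv).core.TotalSpace,
      (cocycle hclosed hne y hv).pt p.1
        ((cocycle hclosed hne y hv).coord p * edge hne y (v p.1) (v p.1)) = p := fun p => by
    rw [edge_self, mul_one, LocalCocycle.pt_coord]
  obtain ⟨γ, hγ⟩ := conj_surjective y (vtx hne (v p.1)) (vtx hne (v q.1))
    (((cocycle hclosed hne y hv).coord p)⁻¹ * (cocycle hclosed hne y hv).coord q)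
  have h := sheetJoined_of_path (hclosed := hclosed) (hv := hv) (hne := hne)
    (g := (cocycle hclosed hne y hv).coord p) hpc γ
    (i := v p.1) (j := v q.1) (by simp [vtx]) (by simp [vtx])
  rw [seg_self, seg_self, Category.id_comp, Category.comp_id, hγ, mul_inv_cancel_left] at h
  have := h p.1 (hv _) q.1 (hv _)
  rwa [hsheet, hsheet] at this

end Lift
end Nerve
end NerveCover

/-- **Let `E` be a connected topological space that is a finite union of closed path-connected
subspaces `E_i`, with all nonempty intersections path-connected.  Then there is a natural
surjection `π₁(E) ↠ π₁(N)`, where `N` is the realization of the nerve of the cover `{E_i}`.**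

The nerve of the cover is realized as a subspace of the standard simplex on the index set `I`. -/
theorem pi1_surjects_onto_pi1_nerve
    (X : Type) [TopologicalSpace X] [ConnectedSpace X]
    (I : Type) [Fintype I] (E : I → Set X)
    (hclosed : ∀ i, IsClosed (E i)) (hcover : ⋃ i, E i = Set.univ)
    (hpc : ∀ i, IsPathConnected (E i))
    (hint : ∀ J : Finset I, J.Nonempty → (⋂ i ∈ J, E i).Nonempty →
      IsPathConnected (⋂ i ∈ J, E i))
    (x : X) (y : ↥(nerveRealization E)) :
    ∃ φ : FundamentalGroup X x →* FundamentalGroup ↥(nerveRealization E) y,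
      Function.Surjective φ := by
  choose v hv using fun z => Set.mem_iUnion.1 (hcover.symm ▸ Set.mem_univ z : z ∈ ⋃ i, E i)
  have hne : ∀ i, (E i).Nonempty := fun i => (hpc i).nonempty
  have := NerveCover.pathConnectedSpace_nerveRealization hclosed hne hv
  obtain ⟨φ, hφ⟩ := NerveCover.exists_surjective_of_joined
    (NerveCover.cocycle hclosed hne y hv) x fun p q => NerveCover.joined_total hpc p q
  exact ⟨(MulEquiv.opOp (FundamentalGroup (nerveRealization E) y)).symm.toMonoidHom.comp φ,
    (MulEquiv.opOp _).symm.surjective.comp hφ⟩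
end
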